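/- Let c ∈ (0,1) and let u be a global solution for c. If the continuous extension of u₁₂ to Q̄ \ {0} attains a local minimum or a local maximum (relative to Q̄ \ {0}) at some point of Q̄ \ {0}, then either u = P_c^+ on Q̄ or u = P_c^- on Q̄. -/

import Mathlib

/-!
The idea is that `u₁₂`, up to a factor, is the imaginary part of a holomorphic function in suitable
coordinates, so that a local extremum is excluded by the open mapping theorem.

Let `{i, j} = {1, 2}` and `ζ = ∂_i u + i √c x_j`, the coordinate of the partial Legendre transform.
The Monge–Ampère equation is equivalent to the holomorphy of `√c x_i + i ∂_j u` as a function of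
`ζ`, and its complex derivative is `f = (√c + i u₁₂) / u_ii` (`PData.Pc_deriv`). If two values of
`f` have the same real part they come from the same `u_ii`, so the higher value has the larger
`u₁₂` (`fc_vertical`). Hence at an interior local maximum of `u₁₂` the values of `f` nearby omit the
points vertically above the value there, and `f` is constant (`PData.const_of_interior`); minima are
symmetric.

On the half-axis `x_j = 0` the boundary condition gives `∂_i u = x_i` and `u_ii = 1`, so `ζ` is real
there and `f - √c` is purely imaginary. A homeomorphism argument shows that `ζ` fills a half-disc
around the image of a boundary point (`PData.Xc_tendsto`). By Schwarz reflection `f - √c` extends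
holomorphically to a full disc, and the reflected function still omits the vertical points, so it is
constant (`const_of_omits`); this reduces a boundary extremum to the interior case
(`PData.const_of_boundary`).

Finally, if `f` is constant then `D²u` is constant, and the boundary values leave only
`u = x₁²/2 + x₂²/2 + B x₁ x₂` with `B² = 1 - c`, that is `P_c^+` or `P_c^-`
(`PData.conclusion`).
-/

noncomputable section

open Set Metric

/-- The Euclidean plane ℝ². -/
abbrev E2 : Type := EuclideanSpace ℝ (Fin 2)

/-- First partial derivative ∂_i. -/
def pd (i : Fin 2) (f : E2 → ℝ) : E2 → ℝ := fun x => fderiv ℝ f x (EuclideanSpace.single i 1)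

/-- Second partial derivative ∂_i ∂_j. -/
def pd2 (i j : Fin 2) (f : E2 → ℝ) : E2 → ℝ := pd i (pd j f)

/-- The open first quadrant Q. -/
def Qset : Set E2 := {x | 0 < x 0 ∧ 0 < x 1}

/-- q(x) = |x|²/2. -/
def qfun (x : E2) : ℝ := ‖x‖ ^ 2 / 2

/-- The Monge–Ampère operator det D²u = u₁₁ u₂₂ − u₁₂². -/
def MA (u : E2 → ℝ) (x : E2) : ℝ := pd2 0 0 u x * pd2 1 1 u x - (pd2 0 1 u x) ^ 2

/-- P_c^+(x) = ½x₁² + ½x₂² + √(1−c) x₁x₂. -/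
def Pplus (c : ℝ) (x : E2) : ℝ := x 0 ^ 2 / 2 + x 1 ^ 2 / 2 + Real.sqrt (1 - c) * (x 0 * x 1)

/-- P_c^-(x) = ½x₁² + ½x₂² − √(1−c) x₁x₂. -/
def Pminus (c : ℝ) (x : E2) : ℝ := x 0 ^ 2 / 2 + x 1 ^ 2 / 2 - Real.sqrt (1 - c) * (x 0 * x 1)

/-- β_c^- = π / arccos(−√(1−c)). -/
def betam (c : ℝ) : ℝ := Real.pi / Real.arccos (-(Real.sqrt (1 - c)))

/-- A global solution (without the sign condition u ≥ 0): u is continuous and convex on Q̄,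
smooth in Q, its first and second partial derivatives extend continuously to Q̄ \ {0},
det D²u = c in Q, and u = q on ∂Q. -/
structure IsGlobalSolutionNS (c : ℝ) (u : E2 → ℝ) : Prop where
  cont : ContinuousOn u (closure Qset)
  conv : ConvexOn ℝ (closure Qset) u
  smooth : ContDiffOn ℝ (⊤ : ℕ∞) u Qset
  ext1 : ∀ i : Fin 2, ∃ g : E2 → ℝ, ContinuousOn g (closure Qset \ {0}) ∧ ∀ x ∈ Qset, g x = pd i u x
  ext2 : ∀ i j : Fin 2, ∃ g : E2 → ℝ, ContinuousOn g (closure Qset \ {0}) ∧ ∀ x ∈ Qset, g x = pd2 i j u x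
  ma : ∀ x ∈ Qset, MA u x = c
  bdry : ∀ x ∈ frontier Qset, u x = qfun x

/-- A global solution: additionally u ≥ 0 on Q̄. -/
structure IsGlobalSolution (c : ℝ) (u : E2 → ℝ) extends IsGlobalSolutionNS c u : Prop where
  nonneg : ∀ x ∈ closure Qset, 0 ≤ u x

/-! ### The quadrant and the differential data of a solution -/

open Filter Topology

lemma two_le_smooth' : (2 : WithTop ℕ∞) ≤ ((⊤ : ℕ∞) : WithTop ℕ∞) :=
  WithTop.coe_le_coe.2 (le_top : (2 : ℕ∞) ≤ ⊤)

lemma two_le_smooth : (1 : WithTop ℕ∞) + 1 ≤ ((⊤ : ℕ∞) : WithTop ℕ∞) := by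
  rw [one_add_one_eq_two]; exact two_le_smooth'

/-- The covector with coordinates `a`. -/
def grad (a : Fin 2 → ℝ) : E2 →L[ℝ] ℝ := ∑ k, a k • EuclideanSpace.proj k

lemma grad_apply (a : Fin 2 → ℝ) (v : E2) : grad a v = a 0 * v 0 + a 1 * v 1 := by
  simp [grad, Fin.sum_univ_two]

lemma continuous_grad : Continuous grad := by
  unfold grad; fun_prop

lemma clm_eq_grad (L : E2 →L[ℝ] ℝ) : L = grad fun k => L (EuclideanSpace.single k 1) := by
  ext v
  have hv : v = v 0 • EuclideanSpace.single 0 1 + v 1 • EuclideanSpace.single 1 1 := by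
    ext k; fin_cases k <;> simp
  rw [grad_apply]
  conv_lhs => rw [hv]
  simp [mul_comm]

lemma mem_Q {x : E2} : x ∈ Qset ↔ ∀ k, 0 < x k := by
  simp [Qset, Fin.forall_fin_two]

lemma isOpen_Q : IsOpen Qset := by
  have h : ∀ k : Fin 2, IsOpen {x : E2 | 0 < x k} := fun k =>
    isOpen_lt continuous_const (by fun_prop)
  exact (h 0).inter (h 1)

lemma convex_Q : Convex ℝ Qset := by
  intro x hx y hy a b ha hb hab
  rw [mem_Q] at *
  intro k
  have h1 := hx k
  have h2 := hy k
  simp only [PiLp.add_apply, PiLp.smul_apply, smul_eq_mul]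
  rcases ha.eq_or_lt with rfl | ha
  · have : b = 1 := by linarith
    subst this; simpa using h2
  · have := mul_pos ha h1
    have := mul_nonneg hb h2.le
    linarith

lemma mem_cQ {x : E2} : x ∈ closure Qset ↔ ∀ k, 0 ≤ x k := by
  constructor
  · intro hx
    have h : ∀ k : Fin 2, IsClosed {x : E2 | 0 ≤ x k} := fun k =>
      isClosed_le continuous_const (by fun_prop)
    have hcl : IsClosed {x : E2 | 0 ≤ x 0 ∧ 0 ≤ x 1} := (h 0).inter (h 1)
    have hsub : Qset ⊆ {x : E2 | 0 ≤ x 0 ∧ 0 ≤ x 1} := fun y hy => ⟨hy.1.le, hy.2.le⟩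
    have := closure_minimal hsub hcl hx
    rw [Fin.forall_fin_two]; exact this
  · intro hx
    have ht : Tendsto (fun ε : ℝ => x + ε • (EuclideanSpace.single 0 1 + EuclideanSpace.single 1 1 : E2))
        (𝓝[>] 0) (𝓝 x) := by
      have : ContinuousAt (fun ε : ℝ => x + ε • (EuclideanSpace.single 0 1 + EuclideanSpace.single 1 1 : E2)) 0 := by
        fun_prop
      have h := this.tendsto
      simp only [zero_smul, add_zero] at h
      exact h.mono_left nhdsWithin_le_nhds
    refine mem_closure_of_tendsto ht ?_
    filter_upwards [self_mem_nhdsWithin] with ε hε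
    have hε : 0 < ε := hε
    rw [mem_Q]
    intro k
    have := hx k
    fin_cases k <;> simp at this ⊢ <;> linarith

lemma Q_sub : Qset ⊆ closure Qset \ {0} := by
  intro x hx
  refine ⟨subset_closure hx, ?_⟩
  rintro rfl
  simpa using mem_Q.1 hx 0

lemma mem_frontier_Q {x : E2} (hx : x ∈ closure Qset) {j : Fin 2} (hj : x j = 0) :
    x ∈ frontier Qset := by
  rw [frontier, isOpen_Q.interior_eq]
  exact ⟨hx, fun h => (mem_Q.1 h j).ne' hj⟩

lemma qfun_eq (x : E2) : qfun x = x 0 ^ 2 / 2 + x 1 ^ 2 / 2 := by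
  rw [qfun, EuclideanSpace.norm_sq_eq]
  simp [Fin.sum_univ_two]; ring

/-- The differential data of a global solution used in the argument: `G i` and `H i j` are the
continuous extensions to `Q̄ \ {0}` of `∂_i u` and `∂_i ∂_j u`. The quadratic boundary values are
recorded in coordinates. -/
structure PData (c : ℝ) (u : E2 → ℝ) (G : Fin 2 → E2 → ℝ) (H : Fin 2 → Fin 2 → E2 → ℝ) : Prop where
  cu : ContinuousOn u (closure Qset)
  cG : ∀ i, ContinuousOn (G i) (closure Qset \ {0})
  cH : ∀ i j, ContinuousOn (H i j) (closure Qset \ {0})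
  du : ∀ x ∈ Qset, HasFDerivAt u (grad fun k => G k x) x
  dG : ∀ i, ∀ x ∈ Qset, HasStrictFDerivAt (G i) (grad fun k => H k i x) x
  symm : ∀ x ∈ Qset, H 0 1 x = H 1 0 x
  pos : ∀ i, ∀ x ∈ Qset, 0 < H i i x
  det : ∀ x ∈ Qset, H 0 0 x * H 1 1 x - H 0 1 x ^ 2 = c
  bd : ∀ x ∈ closure Qset, ∀ j, x j = 0 → u x = x 0 ^ 2 / 2 + x 1 ^ 2 / 2

/-- Convexity gives nonnegative pure second derivatives. -/
lemma pd2_nonneg {u : E2 → ℝ} (hconv : ConvexOn ℝ (closure Qset) u)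
    (hsm : ContDiffOn ℝ (⊤ : ℕ∞) u Qset) (i : Fin 2) {x : E2} (hx : x ∈ Qset) :
    0 ≤ pd2 i i u x := by
  set e : E2 := EuclideanSpace.single i 1 with he
  set T : Set ℝ := {t | x + t • e ∈ Qset} with hT
  have hTo : IsOpen T := isOpen_Q.preimage (by fun_prop)
  have h0 : (0 : ℝ) ∈ T := by simpa [hT] using hx
  have hsmx : ∀ y ∈ Qset, ContDiffAt ℝ (⊤ : ℕ∞) u y := fun y hy =>
    hsm.contDiffAt (isOpen_Q.mem_nhds hy)
  have hline : ∀ t : ℝ, HasDerivAt (fun t : ℝ => x + t • e) e t := by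
    intro t
    simpa using ((hasDerivAt_id t).smul_const e).const_add x
  have hd : ∀ t ∈ T, HasDerivAt (fun t : ℝ => u (x + t • e)) (pd i u (x + t • e)) t := by
    intro t ht
    have h1 := ((hsmx _ ht).differentiableAt (by simp)).hasFDerivAt
    exact h1.comp_hasDerivAt t (hline t)
  have hconvT : ConvexOn ℝ T (fun t : ℝ => u (x + t • e)) := by
    have h2 := (hconv.subset subset_closure convex_Q).comp_affineMap
      (AffineMap.lineMap x (x + e) : ℝ →ᵃ[ℝ] E2)
    have : (AffineMap.lineMap x (x + e) : ℝ → E2) = fun t => x + t • e := by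
      ext t; simp [AffineMap.lineMap_apply, add_comm]
    rw [this] at h2
    exact h2
  have hmono : MonotoneOn (fun t : ℝ => pd i u (x + t • e)) T := by
    have h3 := hconvT.monotoneOn_derivWithin (fun t ht => (hd t ht).differentiableAt.differentiableWithinAt)
    refine h3.congr fun t ht => ?_
    exact ((hd t ht).hasDerivWithinAt.derivWithin (hTo.uniqueDiffWithinAt ht))
  have hpd : DifferentiableAt ℝ (pd i u) x := by
    have := (hsmx x hx).fderiv_right (m := 1) two_le_smooth
    exact (this.differentiableAt (by simp)).clm_apply (differentiableAt_const _)
  have hdd : HasDerivAt (fun t : ℝ => pd i u (x + t • e)) (pd2 i i u x) 0 := by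
    have h1 : HasFDerivAt (pd i u) (fderiv ℝ (pd i u) x) (x + (0:ℝ) • e) := by
      simpa using hpd.hasFDerivAt
    exact h1.comp_hasDerivAt 0 (hline 0)
  have h4 := hmono.derivWithin_nonneg (x := (0:ℝ))
  rwa [hdd.hasDerivWithinAt.derivWithin (hTo.uniqueDiffWithinAt h0)] at h4

/-- A global solution provides differential data in which the mixed entries of `H` are the given
extension of `u₁₂`. Strict convexity in each variable comes from `u₁₁ u₂₂ = c + u₁₂² > 0`. -/
lemma exists_PData {c : ℝ} (hc : 0 < c) {u : E2 → ℝ} (hu : IsGlobalSolution c u) {g : E2 → ℝ}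
    (hgc : ContinuousOn g (closure Qset \ {0})) (hg : ∀ x ∈ Qset, g x = pd2 0 1 u x) :
    ∃ G H, PData c u G H ∧ H 0 1 = g ∧ H 1 0 = g := by
  have hsmx : ∀ y ∈ Qset, ContDiffAt ℝ (⊤ : ℕ∞) u y := fun y hy =>
    hu.smooth.contDiffAt (isOpen_Q.mem_nhds hy)
  choose G hG1 hG2 using hu.ext1
  obtain ⟨a, ha1, ha2⟩ := hu.ext2 0 0
  obtain ⟨b, hb1, hb2⟩ := hu.ext2 1 1
  have hsymm : ∀ x ∈ Qset, pd2 0 1 u x = pd2 1 0 u x := by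
    intro x hx
    have h := (hsmx x hx).isSymmSndFDerivAt (by simpa using two_le_smooth')
    have hd : DifferentiableAt ℝ (fderiv ℝ u) x := by
      have := (hsmx x hx).fderiv_right (m := 1) two_le_smooth
      exact this.differentiableAt (by simp)
    have key : ∀ i j : Fin 2, pd2 i j u x = fderiv ℝ (fderiv ℝ u) x (EuclideanSpace.single i 1)
        (EuclideanSpace.single j 1) := by
      intro i j
      have := (hd.hasFDerivAt.clm_apply (hasFDerivAt_const (EuclideanSpace.single j (1:ℝ) : E2) x)).fderiv
      unfold pd2 pd
      rw [this]; simp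
    rw [key, key]; exact h _ _
  let H : Fin 2 → Fin 2 → E2 → ℝ := ![![a, g], ![g, b]]
  have hH : ∀ i j, ∀ x ∈ Qset, H i j x = pd2 i j u x := by
    intro i j x hx
    fin_cases i <;> fin_cases j <;> simp [H]
    · exact ha2 x hx
    · exact hg x hx
    · rw [hg x hx, hsymm x hx]
    · exact hb2 x hx
  refine ⟨G, H, ⟨hu.cont, hG1, ?_, ?_, ?_, fun x hx => rfl, ?_, ?_, ?_⟩, rfl, rfl⟩
  · intro i j
    fin_cases i <;> fin_cases j <;> simpa [H]
  · intro x hx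
    have := ((hsmx x hx).differentiableAt (by simp)).hasFDerivAt
    rw [clm_eq_grad (fderiv ℝ u x)] at this
    rwa [show (fun k => G k x) = fun k => fderiv ℝ u x (EuclideanSpace.single k 1) from
      funext fun k => hG2 k x hx]
  · intro i x hx
    have h1 : ContDiffAt ℝ 1 (pd i u) x := by
      have := (hsmx x hx).fderiv_right (m := 1) two_le_smooth
      exact this.clm_apply contDiffAt_const
    have h2 := h1.hasStrictFDerivAt (by simp)
    rw [clm_eq_grad (fderiv ℝ (pd i u) x)] at h2
    have h3 : pd i u =ᶠ[𝓝 x] G i := by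
      filter_upwards [isOpen_Q.mem_nhds hx] with y hy using (hG2 i y hy).symm
    rw [show (fun k => H k i x) = fun k => fderiv ℝ (pd i u) x (EuclideanSpace.single k 1) from
      funext fun k => hH k i x hx]
    exact h2.congr_of_eventuallyEq h3
  · intro i x hx
    rw [hH i i x hx]
    refine lt_of_le_of_ne (pd2_nonneg hu.conv hu.smooth i hx) ?_
    intro h
    have := hu.ma x hx
    unfold MA at this
    fin_cases i <;> simp at h <;> rw [← h] at this <;> nlinarith [sq_nonneg (pd2 0 1 u x)]
  · intro x hx
    rw [hH _ _ x hx, hH _ _ x hx, hH _ _ x hx]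
    exact hu.ma x hx
  · intro x hx j hj
    rw [hu.bdry x (mem_frontier_Q hx hj), qfun_eq]

/-! ### Schwarz reflection and the open mapping argument at the boundary -/

open ComplexConjugate

lemma exists_vertical_mem {W : Set ℂ} (hW : IsOpen W) {w : ℂ} (hw : w ∈ W) (s : ℝ) :
    ∃ ε : ℝ, 0 < ε ∧ w + (ε * s : ℝ) * Complex.I ∈ W := by
  have hc : ContinuousAt (fun ε : ℝ => w + (ε * s : ℝ) * Complex.I) 0 := by fun_prop
  have h := hc.eventually (hW.mem_nhds (by simpa using hw))
  have h2 : ∀ᶠ ε : ℝ in 𝓝[>] 0, w + (ε * s : ℝ) * Complex.I ∈ W :=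
    h.filter_mono nhdsWithin_le_nhds
  obtain ⟨ε, h3, h4⟩ := (h2.and self_mem_nhdsWithin).exists
  exact ⟨ε, h4, h3⟩

/-- A continuous function that is holomorphic off the real line, with a derivative extending
continuously across it, is holomorphic. -/
lemma hasDerivAt_across {F f : ℂ → ℂ} {U : Set ℂ} (hU : IsOpen U)
    (hF : ContinuousOn F U) (hf : ContinuousOn f U)
    (hd : ∀ z ∈ U, z.im ≠ 0 → HasDerivAt F (f z) z) {z : ℂ} (hz : z ∈ U) :
    HasDerivAt F (f z) z := by
  obtain ⟨ρ, hρ, hsub⟩ := Metric.nhds_basis_closedBall.mem_iff.1 (hU.mem_nhds hz)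
  have key : ∀ T : Set ℂ, IsOpen T → Convex ℝ T → (∀ w ∈ T, w.im ≠ 0) →
      HasFDerivWithinAt F (f z • (1 : ℂ →L[ℝ] ℂ)) (closure (ball z ρ ∩ T)) z := by
    intro T hTo hTc hT
    have hsU : ball z ρ ∩ T ⊆ U := fun w hw => hsub (ball_subset_closedBall hw.1)
    have hdw : ∀ w ∈ ball z ρ ∩ T, HasFDerivAt F (f w • (1 : ℂ →L[ℝ] ℂ)) w := fun w hw =>
      (hd w (hsU hw) (hT w hw.2)).complexToReal_fderiv
    refine hasFDerivWithinAt_closure_of_tendsto_fderiv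
      (fun w hw => (hdw w hw).differentiableAt.differentiableWithinAt)
      ((convex_ball z ρ).inter hTc) (isOpen_ball.inter hTo) ?_ ?_
    · intro y hy
      have hyU : y ∈ U := hsub ((closure_mono inter_subset_left).trans closure_ball_subset_closedBall hy)
      exact (hF y hyU).mono hsU
    · have h1 : Tendsto f (𝓝[ball z ρ ∩ T] z) (𝓝 (f z)) :=
        ((hf z hz).mono hsU).tendsto
      refine (h1.smul_const (1 : ℂ →L[ℝ] ℂ)).congr' ?_
      filter_upwards [self_mem_nhdsWithin] with w hw using (hdw w hw).fderiv.symm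
  have h1 := key {w | 0 < w.im} (isOpen_lt continuous_const Complex.continuous_im)
    (convex_halfSpace_im_gt 0) (fun w hw => (ne_of_gt hw))
  have h2 := key {w | w.im < 0} (isOpen_lt Complex.continuous_im continuous_const)
    (convex_halfSpace_im_lt 0) (fun w hw => (ne_of_lt hw))
  have hnhds : closure (ball z ρ ∩ {w | 0 < w.im}) ∪ closure (ball z ρ ∩ {w | w.im < 0}) ∈ 𝓝 z := by
    filter_upwards [ball_mem_nhds z hρ] with w hw
    rcases le_total 0 w.im with h | h
    · left
      exact isOpen_ball.inter_closure ⟨hw, by rw [Complex.closure_setOfPred_lt_im]; exact h⟩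
    · right
      exact isOpen_ball.inter_closure ⟨hw, by rw [Complex.closure_setOfPred_im_lt]; exact h⟩
  have h3 := (h1.union h2).hasFDerivAt hnhds
  rw [hasDerivAt_iff_hasFDerivAt]
  refine hasFDerivAt_of_restrictScalars ℝ h3 ?_
  ext w
  simp [mul_comm]

/-- The Schwarz reflection, across the real line, of a function with values in `i ℝ` there. -/
def schwarz (g : ℂ → ℂ) (z : ℂ) : ℂ := if 0 ≤ z.im then g z else -conj (g (conj z))

lemma schwarz_of_nonneg {g : ℂ → ℂ} {z : ℂ} (hz : 0 ≤ z.im) : schwarz g z = g z := if_pos hz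

lemma schwarz_of_nonpos {g : ℂ → ℂ} {z : ℂ} (hz : z.im ≤ 0) (h0 : z.im = 0 → (g z).re = 0) :
    schwarz g z = -conj (g (conj z)) := by
  rcases hz.lt_or_eq with h | h
  · exact if_neg h.not_ge
  · rw [schwarz_of_nonneg h.ge, Complex.conj_eq_iff_im.2 h]
    apply Complex.ext <;> simp [h0 h]

lemma conj_mem_ball {b r : ℝ} {z : ℂ} (hz : z ∈ ball (b : ℂ) r) : conj z ∈ ball (b : ℂ) r := by
  rw [mem_ball, dist_eq_norm] at *
  rw [← Complex.conj_ofReal b, ← map_sub, Complex.norm_conj]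
  exact hz

lemma continuousOn_schwarz {b r : ℝ} {g : ℂ → ℂ}
    (hg : ∀ z ∈ ball (b : ℂ) r, 0 ≤ z.im → ContinuousWithinAt g {w | 0 ≤ w.im} z)
    (hg0 : ∀ z ∈ ball (b : ℂ) r, z.im = 0 → (g z).re = 0) :
    ContinuousOn (schwarz g) (ball (b : ℂ) r) := by
  intro z hz
  have hup : ContinuousWithinAt (schwarz g) (ball (b : ℂ) r ∩ {w | 0 ≤ w.im}) z := by
    by_cases h : 0 ≤ z.im
    · exact ((hg z hz h).mono inter_subset_right).congr (fun w hw => schwarz_of_nonneg hw.2)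
        (schwarz_of_nonneg h)
    · apply continuousWithinAt_of_notMem_closure
      intro hcl
      have : z ∈ {w : ℂ | 0 ≤ w.im} := by
        have := closure_mono (inter_subset_right : ball (b : ℂ) r ∩ {w | 0 ≤ w.im} ⊆ _) hcl
        rwa [(isClosed_le continuous_const Complex.continuous_im).closure_eq] at this
      exact h this
  have hlo : ContinuousWithinAt (schwarz g) (ball (b : ℂ) r ∩ {w | w.im ≤ 0}) z := by
    by_cases h : z.im ≤ 0
    · have h1 : ContinuousWithinAt g {w | 0 ≤ w.im} (conj z) :=
        hg _ (conj_mem_ball hz) (by simpa using h)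
      have h2 : ContinuousWithinAt (fun w : ℂ => g (conj w)) (ball (b : ℂ) r ∩ {w | w.im ≤ 0}) z :=
        ContinuousWithinAt.comp (t := {w : ℂ | 0 ≤ w.im}) (f := fun w : ℂ => conj w) h1
          Complex.continuous_conj.continuousWithinAt
          (fun w hw => by simpa using hw.2)
      have h3 : ContinuousWithinAt (fun w : ℂ => -conj (g (conj w)))
          (ball (b : ℂ) r ∩ {w | w.im ≤ 0}) z :=
        (Complex.continuous_conj.continuousAt.comp_continuousWithinAt h2).neg
      exact h3.congr (fun w hw => schwarz_of_nonpos hw.2 (hg0 w hw.1)) (schwarz_of_nonpos h (hg0 z hz))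
    · apply continuousWithinAt_of_notMem_closure
      intro hcl
      have : z ∈ {w : ℂ | w.im ≤ 0} := by
        have := closure_mono (inter_subset_right : ball (b : ℂ) r ∩ {w | w.im ≤ 0} ⊆ _) hcl
        rwa [(isClosed_le Complex.continuous_im continuous_const).closure_eq] at this
      exact h this
  refine (hup.union hlo).mono fun w hw => ?_
  rcases le_total 0 w.im with h | h
  · exact Or.inl ⟨hw, h⟩
  · exact Or.inr ⟨hw, h⟩

/-- Boundary form of the open mapping argument on an upper half-disc: if `F` and `f = F'` are
imaginary on the real line and `f` omits the points `f b + i ε s`, `ε > 0`, then `f` is constant.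
By reflection `f` extends holomorphically across the real line. The omitted ray lies on the
imaginary axis, which the reflection `w ↦ -conj w` of the values fixes pointwise, so the extension
omits it too; but the image of an open map would contain points of the ray close to `f b`. -/
lemma const_of_omits {b r : ℝ} (hr : 0 < r) {F f : ℂ → ℂ}
    (hd : ∀ z ∈ ball (b : ℂ) r, 0 < z.im → HasDerivAt F (f z) z)
    (hFc : ∀ z ∈ ball (b : ℂ) r, 0 ≤ z.im → ContinuousWithinAt F {w | 0 ≤ w.im} z)
    (hfc : ∀ z ∈ ball (b : ℂ) r, 0 ≤ z.im → ContinuousWithinAt f {w | 0 ≤ w.im} z)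
    (hF0 : ∀ z ∈ ball (b : ℂ) r, z.im = 0 → (F z).re = 0)
    (hf0 : ∀ z ∈ ball (b : ℂ) r, z.im = 0 → (f z).re = 0)
    (s : ℝ)
    (hs : ∀ ε : ℝ, 0 < ε → ∀ z ∈ ball (b : ℂ) r, 0 ≤ z.im → f z ≠ f b + (ε * s : ℝ) * Complex.I) :
    ∀ z ∈ ball (b : ℂ) r, 0 ≤ z.im → f z = f b := by
  have hb : (b : ℂ) ∈ ball (b : ℂ) r := mem_ball_self hr
  have hb0 : (f b).re = 0 := hf0 _ hb (by simp)
  have hD : ∀ z ∈ ball (b : ℂ) r, HasDerivAt (schwarz F) (schwarz f z) z := by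
    intro z hz
    refine hasDerivAt_across isOpen_ball (continuousOn_schwarz hFc hF0) (continuousOn_schwarz hfc hf0)
      ?_ hz
    intro w hw hw0
    rcases lt_or_gt_of_ne hw0 with h | h
    · have h1 := (hd _ (conj_mem_ball hw) (by simpa using h)).conj_conj.neg
      rw [Complex.conj_conj] at h1
      rw [schwarz_of_nonpos h.le (hf0 w hw)]
      refine h1.congr_of_eventuallyEq ?_
      filter_upwards [(isOpen_lt Complex.continuous_im continuous_const).mem_nhds h] with v hv
      exact if_neg (not_le.2 hv)
    · rw [schwarz_of_nonneg h.le]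
      refine (hd w hw h).congr_of_eventuallyEq ?_
      filter_upwards [(isOpen_lt continuous_const Complex.continuous_im).mem_nhds h] with v hv
      exact schwarz_of_nonneg (le_of_lt hv)
  have han : AnalyticOnNhd ℂ (deriv (schwarz F)) (ball (b : ℂ) r) :=
    (DifferentiableOn.analyticOnNhd
      (fun z hz => (hD z hz).differentiableAt.differentiableWithinAt) isOpen_ball).deriv
  have hbr : deriv (schwarz F) b = f b := by
    rw [(hD _ hb).deriv, schwarz_of_nonneg (by simp)]
  rcases han.is_constant_or_isOpen (convex_ball _ _).isPreconnected with ⟨w, hw⟩ | ho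
  · intro z hz hz0
    rw [← hbr, hw _ hb, ← hw z hz, (hD z hz).deriv, schwarz_of_nonneg hz0]
  · exfalso
    obtain ⟨ε, hε, z, hz, hzε⟩ := exists_vertical_mem (ho _ Subset.rfl isOpen_ball) ⟨_, hb, hbr⟩ s
    rw [(hD z hz).deriv] at hzε
    rcases le_total 0 z.im with h | h
    · rw [schwarz_of_nonneg h] at hzε
      exact hs ε hε z hz h hzε
    · rw [schwarz_of_nonpos h (hf0 z hz)] at hzε
      refine hs ε hε _ (conj_mem_ball hz) (by simpa using h) ?_
      have h2 := congrArg (fun v => -conj v) hzε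
      simp only [map_neg, Complex.conj_conj, neg_neg] at h2
      rw [h2]
      apply Complex.ext <;> simp [hb0, add_comm]

section core

/-! ### Coordinates and traces on the open half-axes

Throughout, `i ≠ j` are the two indices in either order, so that both half-axes are treated at
once. -/

variable {c : ℝ} {u : E2 → ℝ} {G : Fin 2 → E2 → ℝ} {H : Fin 2 → Fin 2 → E2 → ℝ} {i j : Fin 2}

lemma eq_or_of_ne (hij : i ≠ j) (k : Fin 2) : k = i ∨ k = j := by
  fin_cases i <;> fin_cases j <;> fin_cases k <;> simp_all

lemma grad_apply' (hij : i ≠ j) (a : Fin 2 → ℝ) (v : E2) : grad a v = a i * v i + a j * v j := by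
  rw [grad_apply]
  fin_cases i <;> fin_cases j <;> simp_all [add_comm]

lemma PData.symm' (h : PData c u G H) {x : E2} (hx : x ∈ Qset) : H j i x = H i j x := by
  have := h.symm x hx
  fin_cases i <;> fin_cases j <;> simp_all

lemma PData.det' (h : PData c u G H) (hij : i ≠ j) {x : E2} (hx : x ∈ Qset) :
    H i i x * H j j x - H i j x ^ 2 = c := by
  have h1 := h.det x hx
  have h2 := h.symm x hx
  fin_cases i <;> fin_cases j <;> simp_all [mul_comm]

lemma PData.bd' (h : PData c u G H) (hij : i ≠ j) {x : E2} (hx : x ∈ closure Qset) (hj : x j = 0) :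
    u x = x i ^ 2 / 2 := by
  have h1 := h.bd x hx j hj
  fin_cases i <;> fin_cases j <;> simp_all

/-- The point with `i`-th coordinate `s` and `j`-th coordinate `t`. -/
def pt (i j : Fin 2) (s t : ℝ) : E2 := EuclideanSpace.single i s + EuclideanSpace.single j t

lemma pt_i (hij : i ≠ j) (s t : ℝ) : pt i j s t i = s := by simp [pt, hij]
lemma pt_j (hij : i ≠ j) (s t : ℝ) : pt i j s t j = t := by simp [pt, hij.symm]

lemma continuous_pt : Continuous fun p : ℝ × ℝ => pt i j p.1 p.2 := by
  have : (fun p : ℝ × ℝ => pt i j p.1 p.2) = fun p : ℝ × ℝ =>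
      p.1 • (EuclideanSpace.single i 1 : E2) + p.2 • (EuclideanSpace.single j 1 : E2) := by
    ext p k; simp [pt]
  rw [this]; fun_prop

lemma ext_ij (hij : i ≠ j) {x y : E2} (h1 : x i = y i) (h2 : x j = y j) : x = y := by
  ext k; rcases eq_or_of_ne hij k with rfl | rfl <;> assumption

lemma pt_eta (hij : i ≠ j) (x : E2) : pt i j (x i) (x j) = x :=
  ext_ij hij (pt_i hij _ _) (pt_j hij _ _)

/-- The open quadrant together with the open half-axis `x i > 0`, `x j = 0`. -/
def Qax (i j : Fin 2) : Set E2 := {x | 0 < x i ∧ 0 ≤ x j}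

lemma Qax_sub (hij : i ≠ j) : Qax i j ⊆ closure Qset \ {0} := by
  intro x hx
  refine ⟨mem_cQ.2 fun k => ?_, ?_⟩
  · rcases eq_or_of_ne hij k with rfl | rfl
    exacts [hx.1.le, hx.2]
  · rintro rfl
    simpa using hx.1

lemma mem_Q' (hij : i ≠ j) {x : E2} : x ∈ Qset ↔ 0 < x i ∧ 0 < x j := by
  rw [mem_Q]
  refine ⟨fun h => ⟨h i, h j⟩, fun h k => ?_⟩
  rcases eq_or_of_ne hij k with rfl | rfl
  exacts [h.1, h.2]

lemma Q_sub_Qax (hij : i ≠ j) : Qset ⊆ Qax i j := fun _ hx =>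
  ⟨((mem_Q' hij).1 hx).1, ((mem_Q' hij).1 hx).2.le⟩

lemma hasDerivAt_line (x : E2) (i : Fin 2) (t : ℝ) :
    HasDerivAt (fun t : ℝ => x + t • (EuclideanSpace.single i 1 : E2)) (EuclideanSpace.single i 1) t := by
  simpa using ((hasDerivAt_id t).smul_const (EuclideanSpace.single i 1 : E2)).const_add x

/-- On the open half-axis `x i > 0`, `x j = 0` the tangential derivative of `φ` exists and equals
the continuous extension of the interior partial derivative `∂_i φ`. -/
lemma bd_deriv (hij : i ≠ j) {φ : E2 → ℝ} {D : Fin 2 → E2 → ℝ}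
    (hφ : ContinuousOn φ (closure Qset \ {0})) (hD : ∀ k, ContinuousOn (D k) (closure Qset \ {0}))
    (hd : ∀ x ∈ Qset, HasFDerivAt φ (grad fun k => D k x) x) {x : E2} (hxi : 0 < x i)
    (hxj : x j = 0) :
    HasDerivAt (fun t : ℝ => φ (x + t • (EuclideanSpace.single i 1 : E2))) (D i x) 0 := by
  set s : Set E2 := ball x (x i / 2) ∩ Qset with hs
  have hxQ : x ∈ closure Qset \ {0} := Qax_sub hij ⟨hxi, hxj.ge⟩
  have hcl : closure s ⊆ closure Qset \ {0} := by
    intro y hy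
    refine ⟨closure_mono inter_subset_right hy, ?_⟩
    rintro rfl
    have h1 : (0 : E2) ∈ closedBall x (x i / 2) :=
      closure_ball_subset_closedBall (closure_mono inter_subset_left hy)
    rw [mem_closedBall, dist_eq_norm, zero_sub, norm_neg] at h1
    have h2 := PiLp.norm_apply_le x i
    rw [Real.norm_eq_abs, abs_of_pos hxi] at h2
    linarith
  have h1 : HasFDerivWithinAt φ (grad fun k => D k x) (closure s) x := by
    refine hasFDerivWithinAt_closure_of_tendsto_fderiv
      (fun y hy => (hd y hy.2).differentiableAt.differentiableWithinAt)
      ((convex_ball _ _).inter convex_Q) (isOpen_ball.inter isOpen_Q) ?_ ?_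
    · intro y hy
      exact (hφ y (hcl hy)).mono (subset_closure.trans hcl)
    · have h2 : Tendsto (fun y => fun k => D k y) (𝓝[s] x) (𝓝 fun k => D k x) :=
        tendsto_pi_nhds.2 fun k => ((hD k x hxQ).mono (subset_closure.trans hcl)).tendsto
      refine ((continuous_grad.tendsto _).comp h2).congr' ?_
      filter_upwards [self_mem_nhdsWithin] with y hy using (hd y hy.2).fderiv.symm
  have h0 : x + (0 : ℝ) • (EuclideanSpace.single i 1 : E2) = x := by simp
  rw [← h0] at h1
  have h2 := h1.comp_hasDerivWithinAt (s := (fun t : ℝ => x + t • (EuclideanSpace.single i 1 : E2)) ⁻¹' closure s)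
    0 (hasDerivAt_line x i 0).hasDerivWithinAt (mapsTo_preimage _ _)
  rw [h0] at h2
  have h3 : (grad fun k => D k x) (EuclideanSpace.single i 1) = D i x := by
    rw [grad_apply' hij]; simp [hij.symm]
  rw [h3] at h2
  refine h2.hasDerivAt ?_
  have hc : Continuous (fun t : ℝ => x + t • (EuclideanSpace.single i 1 : E2)) := by fun_prop
  have h4 : ∀ᶠ t : ℝ in 𝓝 0, x + t • (EuclideanSpace.single i 1 : E2) ∈ ball x (x i / 2) :=
    hc.continuousAt.eventually (p := fun y => y ∈ ball x (x i / 2))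
      (by
        show ∀ᶠ y in 𝓝 (x + (0 : ℝ) • (EuclideanSpace.single i 1 : E2)), y ∈ ball x (x i / 2)
        rw [h0]
        exact ball_mem_nhds x (by positivity))
  have h5 : ∀ᶠ t : ℝ in 𝓝 0, 0 < (x + t • (EuclideanSpace.single i 1 : E2)) i := by
    have : Continuous (fun t : ℝ => (x + t • (EuclideanSpace.single i 1 : E2)) i) := by fun_prop
    exact this.continuousAt.eventually (isOpen_Ioi.mem_nhds (by simpa using hxi))
  filter_upwards [h4, h5] with t ht1 ht2
  refine isOpen_ball.inter_closure ⟨ht1, (Qax_sub hij ⟨ht2, ?_⟩).1⟩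
  simp [hij.symm, hxj]

/-- On the half-axis, `∂_i u` is the tangential derivative of the boundary value `x_i² / 2`. -/
lemma PData.G_bd (h : PData c u G H) (hij : i ≠ j) {x : E2} (hxi : 0 < x i) (hxj : x j = 0) :
    G i x = x i := by
  have h1 := bd_deriv hij (h.cu.mono sdiff_subset) h.cG h.du hxi hxj
  have h2 : HasDerivAt (fun t : ℝ => (x i + t) ^ 2 / 2) (x i) 0 := by
    have := (((hasDerivAt_id (0 : ℝ)).const_add (x i)).pow 2).div_const 2
    simpa using this
  refine (h1.unique (h2.congr_of_eventuallyEq ?_))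
  have h5 : ∀ᶠ t : ℝ in 𝓝 0, 0 < x i + t := by
    have : Continuous (fun t : ℝ => x i + t) := by fun_prop
    exact this.continuousAt.eventually (isOpen_Ioi.mem_nhds (by simpa using hxi))
  filter_upwards [h5] with t ht
  rw [h.bd' hij (Qax_sub hij ⟨?_, ?_⟩).1 ?_] <;> simp [hij.symm, hxj, ht]

/-- On the half-axis, the tangential second derivative is `1`. This makes the real part of `fc`
constant there, which is what permits the reflection. -/
lemma PData.H_bd (h : PData c u G H) (hij : i ≠ j) {x : E2} (hxi : 0 < x i) (hxj : x j = 0) :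
    H i i x = 1 := by
  have h1 := bd_deriv hij (h.cG i) (fun k => h.cH k i) (fun y hy => (h.dG i y hy).hasFDerivAt) hxi hxj
  have h2 : HasDerivAt (fun t : ℝ => x i + t) 1 0 := by
    simpa using (hasDerivAt_id (0 : ℝ)).const_add (x i)
  refine (h1.unique (h2.congr_of_eventuallyEq ?_))
  have h5 : ∀ᶠ t : ℝ in 𝓝 0, 0 < x i + t := by
    have : Continuous (fun t : ℝ => x i + t) := by fun_prop
    exact this.continuousAt.eventually (isOpen_Ioi.mem_nhds (by simpa using hxi))
  filter_upwards [h5] with t ht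
  rw [h.G_bd hij ?_ ?_] <;> simp [hij.symm, hxj, ht]

lemma PData.H_pos (h : PData c u G H) (hij : i ≠ j) {x : E2} (hx : x ∈ Qax i j) : 0 < H i i x := by
  rcases hx.2.eq_or_lt with h0 | h0
  · rw [h.H_bd hij hx.1 h0.symm]; exact one_pos
  · exact h.pos i x ((mem_Q' hij).2 ⟨hx.1, h0⟩)

lemma PData.G_strictMono (h : PData c u G H) (hij : i ≠ j) {x y : E2} (hx : x ∈ Qax i j)
    (hj : x j = y j) (hi : x i < y i) : G i x < G i y := by
  rcases hx.2.eq_or_lt with h0 | h0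
  · rw [h.G_bd hij hx.1 h0.symm, h.G_bd hij (hx.1.trans hi) (by rw [← hj, ← h0])]; exact hi
  · have hd : ∀ t : ℝ, 0 ≤ t → HasDerivAt (fun t : ℝ => G i (x + t • (EuclideanSpace.single i 1 : E2)))
        (H i i (x + t • (EuclideanSpace.single i 1 : E2))) t := by
      intro t ht
      have hQ : x + t • (EuclideanSpace.single i 1 : E2) ∈ Qset := by
        rw [mem_Q' hij]
        have := hx.1
        constructor <;> simp [hij.symm, h0]
        linarith
      have h1 := (h.dG i _ hQ).hasFDerivAt.comp_hasDerivAt t (hasDerivAt_line x i t)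
      rw [grad_apply' hij] at h1
      simpa [hij.symm] using! h1
    have hm := strictMonoOn_of_deriv_pos (convex_Ici (0 : ℝ))
      (fun t ht => (hd t ht).continuousAt.continuousWithinAt) (fun t ht => by
        rw [interior_Ici] at ht
        rw [(hd t (le_of_lt ht)).deriv]
        have := hx.1
        have ht' : 0 < t := ht
        refine h.H_pos hij ⟨?_, ?_⟩ <;> simp [hij.symm, h0.le]
        linarith)
    have h2 := hm (mem_Ici.2 le_rfl)
      (show y i - x i ∈ Ici (0 : ℝ) from (sub_pos.2 hi).le) (sub_pos.2 hi)
    simp only [zero_smul, add_zero] at h2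
    have hy : x + (y i - x i) • (EuclideanSpace.single i 1 : E2) = y :=
      ext_ij hij (by simp) (by simp [hij.symm, hj])
    rwa [hy] at h2

/-! ### The isothermal coordinate and the holomorphic derivative -/

/-- The real-linear map `v ↦ a v + i b v`. -/
def mkC (a b : E2 →L[ℝ] ℝ) : E2 →L[ℝ] ℂ :=
  (Complex.equivRealProdCLM.symm : ℝ × ℝ →L[ℝ] ℂ).comp (a.prod b)

lemma mkC_apply (a b : E2 →L[ℝ] ℝ) (v : E2) : mkC a b v = ⟨a v, b v⟩ := rfl

/-- The complex coordinate `∂_i u + i √c x_j` of the partial Legendre transform in `x i`. It is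
isothermal for the metric `D²u`, and it maps the half-axis `x j = 0` into the real line. -/
def Zc (c : ℝ) (G : Fin 2 → E2 → ℝ) (i j : Fin 2) (x : E2) : ℂ := ⟨G i x, Real.sqrt c * x j⟩

/-- A function that is holomorphic with respect to the coordinate `Zc`. -/
def Pc (c : ℝ) (G : Fin 2 → E2 → ℝ) (i j : Fin 2) (x : E2) : ℂ := ⟨Real.sqrt c * x i, G j x⟩

/-- The complex derivative of `Pc` with respect to `Zc`; its argument is `arctan (u₁₂ / √c)`. -/
def fc (c : ℝ) (H : Fin 2 → Fin 2 → E2 → ℝ) (i j : Fin 2) (x : E2) : ℂ :=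
  ⟨Real.sqrt c / H i i x, H i j x / H i i x⟩

/-- The inverse of the coordinate `Zc` on `Qax i j`, with unspecified values off the image. -/
def Xc (c : ℝ) (G : Fin 2 → E2 → ℝ) (i j : Fin 2) : ℂ → E2 := Function.invFunOn (Zc c G i j) (Qax i j)

lemma PData.injOn_Zc (h : PData c u G H) (hc : 0 < c) (hij : i ≠ j) :
    InjOn (Zc c G i j) (Qax i j) := by
  intro x hx y hy hxy
  have hs := Real.sqrt_pos.2 hc
  have h1 : G i x = G i y := congrArg Complex.re hxy
  have h2 : Real.sqrt c * x j = Real.sqrt c * y j := congrArg Complex.im hxy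
  have h3 : x j = y j := mul_left_cancel₀ hs.ne' h2
  rcases lt_trichotomy (x i) (y i) with h4 | h4 | h4
  · exact absurd h1 (h.G_strictMono hij hx h3 h4).ne
  · exact ext_ij hij h4 h3
  · exact absurd h1 (h.G_strictMono hij hy h3.symm h4).ne'

lemma PData.Xc_Zc (h : PData c u G H) (hc : 0 < c) (hij : i ≠ j) {x : E2} (hx : x ∈ Qax i j) :
    Xc c G i j (Zc c G i j x) = x :=
  (h.injOn_Zc hc hij).leftInvOn_invFunOn hx

/-- `Zc` is a local diffeomorphism: its Jacobian is `√c u_ii`. -/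
lemma PData.Zc_deriv (h : PData c u G H) (hc : 0 < c) (hij : i ≠ j) {x : E2} (hx : x ∈ Qset) :
    ∃ L : E2 ≃L[ℝ] ℂ, HasStrictFDerivAt (Zc c G i j) (L : E2 →L[ℝ] ℂ) x ∧
      ∀ v, L v = ⟨H i i x * v i + H i j x * v j, Real.sqrt c * v j⟩ := by
  have hs := Real.sqrt_pos.2 hc
  set M : E2 →L[ℝ] ℂ := mkC (grad fun k => H k i x)
    (Real.sqrt c • (EuclideanSpace.proj j : E2 →L[ℝ] ℝ)) with hM
  have hMv : ∀ v, M v = ⟨H i i x * v i + H i j x * v j, Real.sqrt c * v j⟩ := by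
    intro v
    apply Complex.ext <;> simp [hM, mkC_apply, grad_apply' hij, h.symm' (i := i) (j := j) hx]
  have hinj : Function.Injective M.toLinearMap := by
    rw [← LinearMap.ker_eq_bot, LinearMap.ker_eq_bot']
    intro v hv
    have hv' : M v = 0 := hv
    rw [hMv] at hv'
    have h1 := congrArg Complex.re hv'
    have h2 := congrArg Complex.im hv'
    simp only [Complex.zero_re, Complex.zero_im] at h1 h2
    have h3 : v j = 0 := by simpa [hs.ne'] using h2
    have h4 : v i = 0 := by simpa [h3, (h.pos i x hx).ne'] using h1
    exact ext_ij hij h4 h3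
  set L := (LinearMap.linearEquivOfInjective M.toLinearMap hinj (by simp)).toContinuousLinearEquiv with hL
  have hLM : (L : E2 →L[ℝ] ℂ) = M := by ext v; rfl
  refine ⟨L, ?_, fun v => hMv v⟩
  rw [hLM]
  have h1 : HasStrictFDerivAt (fun y : E2 => Real.sqrt c * y j) (Real.sqrt c • (EuclideanSpace.proj j : E2 →L[ℝ] ℝ)) x :=
    ((EuclideanSpace.proj j : E2 →L[ℝ] ℝ).hasStrictFDerivAt).const_mul _
  exact (Complex.equivRealProdCLM.symm : ℝ × ℝ →L[ℝ] ℂ).hasStrictFDerivAt.comp x ((h.dG i x hx).prodMk h1)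

/-- The Monge–Ampère equation says exactly that `Pc` is holomorphic in the coordinate `Zc`. -/
lemma PData.Pc_deriv (h : PData c u G H) (hc : 0 < c) (hij : i ≠ j) {x : E2} (hx : x ∈ Qset) :
    ContinuousAt (Xc c G i j) (Zc c G i j x) ∧
    HasDerivAt (fun z => Pc c G i j (Xc c G i j z)) (fc c H i j x) (Zc c G i j x) := by
  obtain ⟨L, hL, hLv⟩ := h.Zc_deriv hc hij hx
  have hX : HasStrictFDerivAt (Xc c G i j) (L.symm : ℂ →L[ℝ] E2) (Zc c G i j x) := by
    refine hL.to_local_left_inverse ?_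
    filter_upwards [isOpen_Q.mem_nhds hx] with y hy using h.Xc_Zc hc hij (Q_sub_Qax hij hy)
  refine ⟨hX.continuousAt, ?_⟩
  have h1 : HasFDerivAt (fun y : E2 => Real.sqrt c * y i) (Real.sqrt c • (EuclideanSpace.proj i : E2 →L[ℝ] ℝ)) x :=
    ((EuclideanSpace.proj i : E2 →L[ℝ] ℝ).hasFDerivAt).const_mul _
  have hP : HasFDerivAt (Pc c G i j) (mkC (Real.sqrt c • (EuclideanSpace.proj i : E2 →L[ℝ] ℝ))
      (grad fun k => H k j x)) x :=
    (Complex.equivRealProdCLM.symm : ℝ × ℝ →L[ℝ] ℂ).hasFDerivAt.comp x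
      (h1.prodMk (h.dG j x hx).hasFDerivAt)
  rw [← h.Xc_Zc hc hij (Q_sub_Qax hij hx)] at hP
  have hcomp := hP.comp (Zc c G i j x) hX.hasFDerivAt
  rw [hasDerivAt_iff_hasFDerivAt]
  refine hasFDerivAt_of_restrictScalars ℝ hcomp ?_
  rw [h.Xc_Zc hc hij (Q_sub_Qax hij hx)]
  have hA := h.pos i x hx
  have hdet := h.det' hij hx
  have hsq := Real.mul_self_sqrt hc.le
  ext1 w
  obtain ⟨v, rfl⟩ := L.surjective w
  apply Complex.ext
  · simp only [ContinuousLinearMap.comp_apply, ContinuousLinearEquiv.coe_coe,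
      ContinuousLinearEquiv.symm_apply_apply, mkC_apply]
    simp [hLv, fc]
    field_simp
    ring
  · simp only [ContinuousLinearMap.comp_apply, ContinuousLinearEquiv.coe_coe,
      ContinuousLinearEquiv.symm_apply_apply, mkC_apply]
    simp [hLv, fc, grad_apply' hij]
    field_simp
    linear_combination (-(v j)) * hdet + v j * hsq

/-- A vertical displacement of the value of `fc` changes `u₁₂` in the same direction, since the
real part `√c / u_ii` is unchanged. -/
lemma fc_vertical (hc : 0 < c) {x y : E2} (hx : 0 < H i i x) (hy : 0 < H i i y) {s ε : ℝ} (hs : s ≠ 0)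
    (hε : 0 < ε) (hf : fc c H i j y = fc c H i j x + (ε * s : ℝ) * Complex.I) :
    s * H i j x < s * H i j y := by
  have hsq := Real.sqrt_pos.2 hc
  have h1 := congrArg Complex.re hf
  have h2 := congrArg Complex.im hf
  simp only [fc, Complex.add_re, Complex.mul_re, Complex.ofReal_re, Complex.I_re, Complex.ofReal_im,
    Complex.I_im, Complex.add_im, Complex.mul_im] at h1 h2
  have h3 : H i i y = H i i x := by
    simp only [mul_zero, mul_one, sub_zero, add_zero] at h1
    field_simp at h1
    exact h1.symm
  rw [h3] at h2
  field_simp at h2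
  have h4 : H i j y = H i j x + ε * s * H i i x := by linarith
  rw [h4]
  have : 0 < ε * H i i x * s ^ 2 := by positivity
  nlinarith

/-! ### Extrema in the interior and on the half-axes -/

/-- Interior case: an interior local extremum of `u₁₂` forces `fc` to be constant. The sign of `s`
selects a maximum or a minimum. If `fc` were not constant, it would be open and its values near `x₀`
would include points vertically displaced from `fc x₀` in the direction of `s`. -/
lemma PData.const_of_interior (h : PData c u G H) (hc : 0 < c) (hij : i ≠ j) {x₀ : E2}
    (hx₀ : x₀ ∈ Qset) {s : ℝ} (hs : s ≠ 0) (hmax : ∀ᶠ x in 𝓝 x₀, s * H i j x ≤ s * H i j x₀) :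
    ∀ x ∈ Qset, fc c H i j x = fc c H i j x₀ := by
  set U := Set.image (Zc c G i j) Qset with hU
  have hUo : IsOpen U := by
    rw [isOpen_iff_mem_nhds]
    rintro _ ⟨x, hx, rfl⟩
    obtain ⟨L, hL, -⟩ := h.Zc_deriv hc hij hx
    rw [← hL.map_nhds_eq_of_equiv]
    exact image_mem_map (isOpen_Q.mem_nhds hx)
  have hUc : IsPreconnected U := by
    refine convex_Q.isPreconnected.image _ fun x hx => ?_
    obtain ⟨L, hL, -⟩ := h.Zc_deriv hc hij hx
    exact hL.continuousAt.continuousWithinAt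
  set Φ := fun z => Pc c G i j (Xc c G i j z) with hΦ
  have hd : ∀ x ∈ Qset, HasDerivAt Φ (fc c H i j x) (Zc c G i j x) := fun x hx => (h.Pc_deriv hc hij hx).2
  have han : AnalyticOnNhd ℂ (deriv Φ) U := by
    refine (DifferentiableOn.analyticOnNhd ?_ hUo).deriv
    rintro _ ⟨x, hx, rfl⟩
    exact (hd x hx).differentiableAt.differentiableWithinAt
  rcases han.is_constant_or_isOpen hUc with ⟨w, hw⟩ | ho
  · intro x hx
    rw [← (hd x hx).deriv, ← (hd x₀ hx₀).deriv, hw _ ⟨x, hx, rfl⟩, hw _ ⟨x₀, hx₀, rfl⟩]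
  · exfalso
    have hXc := (h.Pc_deriv hc hij hx₀).1
    have hev : ∀ᶠ z in 𝓝 (Zc c G i j x₀), s * H i j (Xc c G i j z) ≤ s * H i j x₀ := by
      refine hXc.eventually (p := fun x => s * H i j x ≤ s * H i j x₀) ?_
      rw [h.Xc_Zc hc hij (Q_sub_Qax hij hx₀)]
      exact hmax
    obtain ⟨V, hV, hVo, hxV⟩ := _root_.mem_nhds_iff.1 (hev.and (hUo.mem_nhds ⟨x₀, hx₀, rfl⟩))
    obtain ⟨ε, hε, z, hz, hzε⟩ := exists_vertical_mem (ho V (fun z hz => (hV hz).2) hVo)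
      ⟨_, hxV, (hd x₀ hx₀).deriv⟩ s
    obtain ⟨x, hx, rfl⟩ := (hV hz).2
    have h1 := (hV hz).1
    simp only [h.Xc_Zc hc hij (Q_sub_Qax hij hx)] at h1
    rw [(hd x hx).deriv] at hzε
    exact absurd (fc_vertical hc (h.pos i x₀ hx₀) (h.pos i x hx) hs hε hzε) (not_lt.2 h1)

/-- Near a point of the open half-axis, `Zc` is onto a one-sided neighbourhood, with control on the
preimages: on the segment at height `x j = Im z / √c` between `b - ε` and `b + ε`, the function
`G i` takes the value `Re z`, by the intermediate value theorem. -/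
lemma PData.exists_preimage (h : PData c u G H) (hc : 0 < c) (hij : i ≠ j) {b ε : ℝ} (hε : 0 < ε)
    (hb : ε < b) : ∀ᶠ z in 𝓝[{w : ℂ | 0 ≤ w.im}] (b : ℂ), ∃ x ∈ Qax i j,
      |x i - b| ≤ ε ∧ x j = z.im / Real.sqrt c ∧ Zc c G i j x = z := by
  have hs := Real.sqrt_pos.2 hc
  have hG : ∀ a : ℝ, 0 < a → Tendsto (fun z : ℂ => G i (pt i j a (z.im / Real.sqrt c)))
      (𝓝[{w : ℂ | 0 ≤ w.im}] (b : ℂ)) (𝓝 a) := by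
    intro a ha
    have hmem : pt i j a 0 ∈ Qax i j := ⟨by rwa [pt_i hij], (pt_j hij _ _).ge⟩
    have h1 := ((h.cG i).mono (Qax_sub hij)) _ hmem
    have h2 : G i (pt i j a 0) = a := by
      rw [h.G_bd hij hmem.1 (pt_j hij _ _), pt_i hij]
    have h3 : Tendsto (fun z : ℂ => pt i j a (z.im / Real.sqrt c)) (𝓝[{w : ℂ | 0 ≤ w.im}] (b : ℂ))
        (𝓝[Qax i j] (pt i j a 0)) := by
      refine tendsto_nhdsWithin_iff.2 ⟨?_, ?_⟩
      · have h4 : Continuous (fun z : ℂ => pt i j a (z.im / Real.sqrt c)) :=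
          continuous_pt.comp (continuous_const.prodMk (Complex.continuous_im.div_const _))
        have h5 := h4.tendsto (b : ℂ)
        simp only [Complex.ofReal_im, zero_div] at h5
        exact h5.mono_left nhdsWithin_le_nhds
      · filter_upwards [self_mem_nhdsWithin] with z hz
        exact ⟨by rwa [pt_i hij], by rw [pt_j hij]; exact div_nonneg hz hs.le⟩
    have h6 := h1.tendsto.comp h3
    rwa [h2] at h6
  have hre : Tendsto (fun z : ℂ => z.re) (𝓝[{w : ℂ | 0 ≤ w.im}] (b : ℂ)) (𝓝 b) := by
    have := Complex.continuous_re.tendsto (b : ℂ)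
    rw [Complex.ofReal_re] at this
    exact this.mono_left nhdsWithin_le_nhds
  filter_upwards [(hG (b - ε) (by linarith)).eventually_lt hre (by linarith),
    hre.eventually_lt (hG (b + ε) (by linarith)) (by linarith), self_mem_nhdsWithin] with z h1 h2 h3
  have h3 : 0 ≤ z.im := h3
  have ht : 0 ≤ z.im / Real.sqrt c := div_nonneg h3 hs.le
  have hcont : ContinuousOn (fun a : ℝ => G i (pt i j a (z.im / Real.sqrt c))) (Icc (b - ε) (b + ε)) := by
    refine ((h.cG i).mono (Qax_sub hij)).comp
      (continuous_pt.comp (continuous_id.prodMk continuous_const)).continuousOn ?_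
    intro a ha
    exact ⟨by rw [pt_i hij]; exact lt_of_lt_of_le (by linarith) ha.1, by rwa [pt_j hij]⟩
  obtain ⟨a, ha, hGa⟩ := intermediate_value_Icc (by linarith) hcont ⟨h1.le, h2.le⟩
  refine ⟨pt i j a (z.im / Real.sqrt c), ⟨?_, ?_⟩, ?_, pt_j hij _ _, ?_⟩
  · rw [pt_i hij]; linarith [ha.1]
  · rwa [pt_j hij]
  · rw [pt_i hij, abs_le]; constructor <;> linarith [ha.1, ha.2]
  · apply Complex.ext
    · exact hGa
    · simp only [Zc, pt_j hij]
      field_simp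

/-- The inverse coordinate is continuous up to the half-axis, which it parametrizes by `b ↦ (b, 0)`. -/
lemma PData.Xc_tendsto (h : PData c u G H) (hc : 0 < c) (hij : i ≠ j) {b : ℝ} (hb : 0 < b) :
    Tendsto (Xc c G i j) (𝓝[{w : ℂ | 0 ≤ w.im}] (b : ℂ)) (𝓝[Qax i j] (pt i j b 0)) ∧
    ∀ᶠ z in 𝓝[{w : ℂ | 0 ≤ w.im}] (b : ℂ), Xc c G i j z ∈ Qax i j ∧
      Zc c G i j (Xc c G i j z) = z := by
  have hs := Real.sqrt_pos.2 hc
  have key : ∀ ε : ℝ, 0 < ε → ε < b → ∀ᶠ z in 𝓝[{w : ℂ | 0 ≤ w.im}] (b : ℂ),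
      (Xc c G i j z ∈ Qax i j ∧ Zc c G i j (Xc c G i j z) = z) ∧
      |Xc c G i j z i - b| ≤ ε ∧ Xc c G i j z j = z.im / Real.sqrt c := by
    intro ε hε hεb
    filter_upwards [h.exists_preimage hc hij hε hεb] with z hz
    obtain ⟨x, hx, h1, h2, rfl⟩ := hz
    rw [h.Xc_Zc hc hij hx]
    exact ⟨⟨hx, rfl⟩, h1, h2⟩
  have hmem := (key (b / 2) (by linarith) (by linarith)).mono fun z hz => hz.1
  refine ⟨tendsto_nhdsWithin_iff.2 ⟨?_, hmem.mono fun z hz => hz.1⟩, hmem⟩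
  have h1 : Tendsto (fun z => Xc c G i j z i) (𝓝[{w : ℂ | 0 ≤ w.im}] (b : ℂ)) (𝓝 b) := by
    rw [Metric.tendsto_nhds]
    intro ε hε
    filter_upwards [key (min (ε / 2) (b / 2)) (by positivity)
      ((min_le_right _ _).trans_lt (by linarith))] with z hz
    rw [Real.dist_eq]
    exact (hz.2.1.trans (min_le_left _ _)).trans_lt (by linarith)
  have h2 : Tendsto (fun z => Xc c G i j z j) (𝓝[{w : ℂ | 0 ≤ w.im}] (b : ℂ)) (𝓝 0) := by
    have h3 : Tendsto (fun z : ℂ => z.im / Real.sqrt c) (𝓝[{w : ℂ | 0 ≤ w.im}] (b : ℂ)) (𝓝 0) := by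
      have := (Complex.continuous_im.div_const (Real.sqrt c)).tendsto (b : ℂ)
      simp only [Complex.ofReal_im, zero_div] at this
      exact this.mono_left nhdsWithin_le_nhds
    refine h3.congr' ?_
    filter_upwards [key (b / 2) (by linarith) (by linarith)] with z hz using hz.2.2.symm
  refine ((continuous_pt (i := i) (j := j)).tendsto (b, 0)).comp (h1.prodMk_nhds h2) |>.congr fun z => ?_
  exact pt_eta hij _

/-- Boundary case: a local extremum of `u₁₂` on the half-axis `x j = 0` forces `fc` to be
constant. Near the image of `x₀`, `const_of_omits` makes `fc` constant on a half-disc, hence `u₁₂`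
is constant near a point of the open quadrant, and the interior case applies. -/
lemma PData.const_of_boundary (h : PData c u G H) (hc : 0 < c) (hij : i ≠ j) {x₀ : E2}
    (hxi : 0 < x₀ i) (hxj : x₀ j = 0) {s : ℝ} (hs : s ≠ 0)
    (hmax : ∀ᶠ x in 𝓝[closure Qset \ {0}] x₀, s * H i j x ≤ s * H i j x₀) :
    ∃ w, ∀ x ∈ Qset, fc c H i j x = w := by
  have hsq := Real.sqrt_pos.2 hc
  set b := x₀ i with hb
  have hx0 : x₀ = pt i j b 0 := by rw [← hxj, pt_eta hij]
  have hx0Q : x₀ ∈ Qax i j := ⟨hxi, hxj.ge⟩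
  obtain ⟨hX, hZ⟩ := h.Xc_tendsto hc hij hxi
  have hmax' : ∀ᶠ z in 𝓝[{w : ℂ | 0 ≤ w.im}] (b : ℂ), s * H i j (Xc c G i j z) ≤ s * H i j x₀ := by
    rw [hx0] at hmax ⊢
    exact hX.eventually (hmax.filter_mono (nhdsWithin_mono _ (Qax_sub hij)))
  obtain ⟨r, hr, hball⟩ := Metric.mem_nhdsWithin_iff.1 (hZ.and hmax')
  have hXQ : ∀ z ∈ ball (b : ℂ) r, 0 ≤ z.im → Xc c G i j z ∈ Qax i j := fun z hz h0 =>
    (hball ⟨hz, h0⟩).1.1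
  have hZX : ∀ z ∈ ball (b : ℂ) r, 0 ≤ z.im → Zc c G i j (Xc c G i j z) = z := fun z hz h0 =>
    (hball ⟨hz, h0⟩).1.2
  have hXm : ∀ z ∈ ball (b : ℂ) r, 0 ≤ z.im → s * H i j (Xc c G i j z) ≤ s * H i j x₀ :=
    fun z hz h0 => (hball ⟨hz, h0⟩).2
  have hXj : ∀ z ∈ ball (b : ℂ) r, 0 ≤ z.im → Real.sqrt c * Xc c G i j z j = z.im := fun z hz h0 =>
    congrArg Complex.im (hZX z hz h0)
  have hXj0 : ∀ z ∈ ball (b : ℂ) r, z.im = 0 → Xc c G i j z j = 0 := by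
    intro z hz h0
    have := hXj z hz h0.ge
    rw [h0] at this
    simpa [hsq.ne'] using this
  have hXint : ∀ z ∈ ball (b : ℂ) r, 0 < z.im → Xc c G i j z ∈ Qset := by
    intro z hz h0
    refine (mem_Q' hij).2 ⟨(hXQ z hz h0.le).1, ?_⟩
    have := hXj z hz h0.le
    rw [← this] at h0
    exact pos_of_mul_pos_right h0 hsq.le
  have hXi : ∀ z ∈ ball (b : ℂ) r, z.im = 0 → Xc c G i j z i = z.re := by
    intro z hz h0
    have h1 : G i (Xc c G i j z) = z.re := congrArg Complex.re (hZX z hz h0.ge)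
    rw [← h1, h.G_bd hij (hXQ z hz h0.ge).1 (hXj0 z hz h0)]
  have hXc : ∀ z ∈ ball (b : ℂ) r, 0 ≤ z.im →
      Tendsto (Xc c G i j) (𝓝[{w : ℂ | 0 ≤ w.im}] z) (𝓝[closure Qset \ {0}] (Xc c G i j z)) := by
    intro z hz h0
    rcases h0.eq_or_lt with h0 | h0
    · have hzr : z = (z.re : ℂ) := Complex.ext rfl (by simp [← h0])
      have hre : 0 < z.re := by
        rw [← hXi z hz h0.symm]; exact (hXQ z hz h0.le).1
      have h1 := (h.Xc_tendsto hc hij hre).1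
      have h2 : Xc c G i j z = pt i j z.re 0 := by
        rw [← hXi z hz h0.symm, ← hXj0 z hz h0.symm, pt_eta hij]
      rw [h2]
      rw [← hzr] at h1
      exact h1.mono_right (nhdsWithin_mono _ (Qax_sub hij))
    · have h1 := (h.Pc_deriv hc hij (hXint z hz h0)).1
      rw [hZX z hz h0.le] at h1
      rw [nhdsWithin_eq_nhds.2 (mem_of_superset (isOpen_Q.mem_nhds (hXint z hz h0)) Q_sub)]
      exact h1.tendsto.mono_left nhdsWithin_le_nhds
  have hmemc : ∀ z ∈ ball (b : ℂ) r, 0 ≤ z.im → Xc c G i j z ∈ closure Qset \ {0} := fun z hz h0 =>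
    Qax_sub hij (hXQ z hz h0)
  have hXb : Xc c G i j (b : ℂ) = x₀ := by
    have hbb : (b : ℂ) ∈ ball (b : ℂ) r := mem_ball_self hr
    refine ext_ij hij ?_ ?_
    · rw [hXi _ hbb (by simp)]; simp [hb]
    · rw [hXj0 _ hbb (by simp), hxj]
  -- Subtracting `√c ζ` makes both the function and its derivative imaginary on the real line.
  set F : ℂ → ℂ := fun z => Pc c G i j (Xc c G i j z) - Real.sqrt c * z with hF
  set f : ℂ → ℂ := fun z => fc c H i j (Xc c G i j z) - Real.sqrt c with hf
  have hPcont : ContinuousOn (Pc c G i j) (closure Qset \ {0}) := by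
    have h1 : ContinuousOn (fun x => ((Real.sqrt c * x i, G j x) : ℝ × ℝ)) (closure Qset \ {0}) :=
      ContinuousOn.prodMk (by fun_prop) (h.cG j)
    exact Complex.equivRealProdCLM.symm.continuous.comp_continuousOn h1
  have hfcont : ContinuousOn (fc c H i j) (Qax i j) := by
    have h1 : ContinuousOn (fun x => ((Real.sqrt c / H i i x, H i j x / H i i x) : ℝ × ℝ)) (Qax i j) :=
      ContinuousOn.prodMk
        (continuousOn_const.div ((h.cH i i).mono (Qax_sub hij)) fun x hx => (h.H_pos hij hx).ne')
        (((h.cH i j).mono (Qax_sub hij)).div ((h.cH i i).mono (Qax_sub hij))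
          fun x hx => (h.H_pos hij hx).ne')
    exact Complex.equivRealProdCLM.symm.continuous.comp_continuousOn h1
  have hXQev : ∀ z ∈ ball (b : ℂ) r, 0 ≤ z.im →
      Tendsto (Xc c G i j) (𝓝[{w : ℂ | 0 ≤ w.im}] z) (𝓝[Qax i j] (Xc c G i j z)) := by
    intro z hz h0
    refine tendsto_nhdsWithin_iff.2 ⟨(hXc z hz h0).mono_right nhdsWithin_le_nhds, ?_⟩
    filter_upwards [self_mem_nhdsWithin, mem_nhdsWithin_of_mem_nhds (isOpen_ball.mem_nhds hz)]
      with w hw1 hw2 using hXQ w hw2 hw1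
  have hconst := const_of_omits (b := b) hr (F := F) (f := f)
    (fun z hz h0 => by
      have h1 := (h.Pc_deriv hc hij (hXint z hz h0)).2
      rw [hZX z hz h0.le] at h1
      have h2 := h1.sub ((hasDerivAt_id z).const_mul (Real.sqrt c : ℂ))
      simpa [hF, hf] using! h2)
    (fun z hz h0 => by
      have h1 : ContinuousWithinAt (fun z => Pc c G i j (Xc c G i j z)) {w : ℂ | 0 ≤ w.im} z :=
        (hPcont _ (hmemc z hz h0)).tendsto.comp (hXc z hz h0)
      exact h1.sub (by fun_prop))
    (fun z hz h0 => by
      have h1 : ContinuousWithinAt (fun z => fc c H i j (Xc c G i j z)) {w : ℂ | 0 ≤ w.im} z :=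
        (hfcont _ (hXQ z hz h0)).tendsto.comp (hXQev z hz h0)
      exact h1.sub (by fun_prop))
    (fun z hz h0 => by simp [hF, Pc, hXi z hz h0])
    (fun z hz h0 => by
      simp [hf, fc, h.H_bd hij (hXQ z hz h0.ge).1 (hXj0 z hz h0)])
    s
    (fun ε hε z hz h0 heq => by
      simp only [hf, hXb] at heq
      have heq' : fc c H i j (Xc c G i j z) = fc c H i j x₀ + (ε * s : ℝ) * Complex.I := by
        linear_combination heq
      exact absurd (fc_vertical hc (h.H_pos hij hx0Q) (h.H_pos hij (hXQ z hz h0)) hs hε heq')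
        (not_lt.2 (hXm z hz h0)))
  -- A point of the half-disc is an interior point near which `u₁₂` is constant.
  set z₁ : ℂ := ⟨b, r / 2⟩ with hz₁
  have hz₁b : z₁ ∈ ball (b : ℂ) r := by
    rw [mem_ball, dist_eq_norm]
    have : z₁ - b = ((r / 2 : ℝ) : ℂ) * Complex.I := by apply Complex.ext <;> simp [hz₁]
    rw [this, norm_mul, Complex.norm_I, mul_one, Complex.norm_real, Real.norm_eq_abs,
      abs_of_pos (by positivity)]
    linarith
  have hz₁i : 0 < z₁.im := by simp [hz₁, hr]
  have hx₁ := hXint z₁ hz₁b hz₁i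
  refine ⟨_, h.const_of_interior hc hij hx₁ hs ?_⟩
  obtain ⟨L, hL, -⟩ := h.Zc_deriv hc hij hx₁
  have hcZ := hL.continuousAt
  have hZz : Zc c G i j (Xc c G i j z₁) = z₁ := hZX z₁ hz₁b hz₁i.le
  have hnb : ball (b : ℂ) r ∩ {w | 0 < w.im} ∈ 𝓝 (Zc c G i j (Xc c G i j z₁)) := by
    rw [hZz]
    exact (isOpen_ball.inter (isOpen_lt continuous_const Complex.continuous_im)).mem_nhds ⟨hz₁b, hz₁i⟩
  filter_upwards [hcZ.preimage_mem_nhds hnb, isOpen_Q.mem_nhds hx₁] with x hx hxQ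
  have h1 := hconst _ hx.1 (le_of_lt hx.2)
  have h2 := hconst _ hz₁b hz₁i.le
  have h3 : fc c H i j x = fc c H i j (Xc c G i j z₁) := by
    have h4 := h1.trans h2.symm
    simp only [hf, h.Xc_Zc hc hij (Q_sub_Qax hij hxQ)] at h4
    linear_combination h4
  have h5 : H i j x = H i j (Xc c G i j z₁) := by
    have h6 := congrArg Complex.re h3
    have h7 := congrArg Complex.im h3
    have hp1 := h.pos i x hxQ
    have hp2 := h.pos i _ hx₁
    simp only [fc] at h6 h7
    have h8 : H i i x = H i i (Xc c G i j z₁) := by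
      field_simp at h6
      exact h6.symm
    rw [h8] at h7
    field_simp at h7
    exact h7
  rw [h5]

/-! ### Solutions with constant `fc` -/

lemma hasFDerivAt_of_pointwise {φ ψ : E2 → ℝ} {L M : E2 →L[ℝ] ℝ} {x : E2}
    (h : HasFDerivAt φ L x) (hf : ∀ y, ψ y = φ y) (hL : ∀ v, M v = L v) : HasFDerivAt ψ M x := by
  obtain rfl : ψ = φ := funext hf
  obtain rfl : M = L := ContinuousLinearMap.ext hL
  exact h

/-- If `u_ii` and `u_ij` are constant then `∂_i u` is linear; the trace `∂_i u = x_i` on the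
half-axis gives the coefficient of `x_i` and the vanishing constant term. -/
lemma PData.G_linear (h : PData c u G H) (hij : i ≠ j) {A B : ℝ}
    (hA : ∀ x ∈ Qset, H i i x = A) (hB : ∀ x ∈ Qset, H i j x = B) :
    ∀ x ∈ Qset, G i x = x i + B * x j := by
  have hlin : ∀ x : E2, HasFDerivAt (fun x : E2 => A * x i + B * x j)
      (A • (EuclideanSpace.proj i : E2 →L[ℝ] ℝ) + B • (EuclideanSpace.proj j : E2 →L[ℝ] ℝ)) x := fun x =>
    ((EuclideanSpace.proj i : E2 →L[ℝ] ℝ).hasFDerivAt.const_mul A).add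
      ((EuclideanSpace.proj j : E2 →L[ℝ] ℝ).hasFDerivAt.const_mul B)
  have hd : ∀ x ∈ Qset, HasFDerivAt (fun x => G i x - (A * x i + B * x j)) (0 : E2 →L[ℝ] ℝ) x := by
    intro x hx
    refine hasFDerivAt_of_pointwise ((h.dG i x hx).hasFDerivAt.sub (hlin x)) (fun _ => rfl) fun v => ?_
    simp [grad_apply' hij, hA x hx, h.symm' (i := i) (j := j) hx, hB x hx]
  obtain ⟨K, hK⟩ := isOpen_Q.exists_is_const_of_fderiv_eq_zero convex_Q.isPreconnected
    (fun x hx => (hd x hx).differentiableAt.differentiableWithinAt)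
    (fun x hx => (hd x hx).fderiv)
  have hcl : ∀ x ∈ Qax i j, G i x - (A * x i + B * x j) = K := by
    have hc1 : ContinuousOn (fun x => G i x - (A * x i + B * x j)) (closure Qset \ {0}) :=
      (h.cG i).sub (by fun_prop)
    intro x hx
    have hx' := Qax_sub hij hx
    have : (𝓝[Qset] x).NeBot := mem_closure_iff_nhdsWithin_neBot.1 hx'.1
    have h1 := ((hc1 x hx').mono Q_sub).tendsto
    refine tendsto_nhds_unique h1 (tendsto_const_nhds.congr' ?_)
    filter_upwards [self_mem_nhdsWithin] with y hy using (hK y hy).symm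
  have hax : ∀ a : ℝ, 0 < a → a - A * a = K := by
    intro a ha
    have h1 := hcl (pt i j a 0) ⟨by rwa [pt_i hij], (pt_j hij _ _).ge⟩
    rw [h.G_bd hij (by rwa [pt_i hij]) (pt_j hij _ _), pt_i hij, pt_j hij] at h1
    linarith
  have h1 := hax 1 one_pos
  have h2 := hax 2 two_pos
  have hA1 : A = 1 := by linarith
  have hK0 : K = 0 := by linarith
  intro x hx
  have h3 := hcl x (Q_sub_Qax hij hx)
  rw [hA1, hK0] at h3
  linarith

/-- If `fc` is constant then so is `D²u`, and the boundary values give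
`u = x₁²/2 + x₂²/2 + B x₁ x₂` with `1 - B² = c`. -/
lemma PData.conclusion (h : PData c u G H) (hc : 0 < c) (hij : i ≠ j) {w : ℂ}
    (hw : ∀ x ∈ Qset, fc c H i j x = w) :
    (∀ x ∈ closure Qset, u x = Pplus c x) ∨ (∀ x ∈ closure Qset, u x = Pminus c x) := by
  have hsq := Real.sqrt_pos.2 hc
  set o : E2 := pt i j 1 1 with ho
  have hoQ : o ∈ Qset := (mem_Q' hij).2 ⟨by simp [ho, pt_i hij], by simp [ho, pt_j hij]⟩
  have hA : ∀ x ∈ Qset, H i i x = H i i o := by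
    intro x hx
    have h6 := congrArg Complex.re ((hw x hx).trans (hw o hoQ).symm)
    have hp1 := h.pos i x hx
    have hp2 := h.pos i o hoQ
    simp only [fc] at h6
    field_simp at h6
    exact h6.symm
  have hB : ∀ x ∈ Qset, H i j x = H i j o := by
    intro x hx
    have h7 := congrArg Complex.im ((hw x hx).trans (hw o hoQ).symm)
    have hp2 := h.pos i o hoQ
    simp only [fc, hA x hx] at h7
    field_simp at h7
    exact h7
  set B := H i j o with hBdef
  have hC : ∀ x ∈ Qset, H j j x = H j j o := by
    intro x hx
    have h1 := h.det' hij hx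
    have h2 := h.det' hij hoQ
    rw [hA x hx, hB x hx] at h1
    have : H i i o * (H j j x - H j j o) = 0 := by linear_combination h1 - h2
    rcases mul_eq_zero.1 this with h3 | h3
    · exact absurd h3 (h.pos i o hoQ).ne'
    · linarith
  have hGi := h.G_linear hij hA hB
  have hGj := h.G_linear hij.symm hC (fun x hx => (h.symm' hx).trans (hB x hx))
  have hquad : ∀ x : E2, HasFDerivAt (fun x : E2 => x i ^ 2 / 2 + x j ^ 2 / 2 + B * (x i * x j))
      ((x i + B * x j) • (EuclideanSpace.proj i : E2 →L[ℝ] ℝ) +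
        (x j + B * x i) • (EuclideanSpace.proj j : E2 →L[ℝ] ℝ)) x := by
    intro x
    have hi : HasFDerivAt (fun x : E2 => x i) (EuclideanSpace.proj i : E2 →L[ℝ] ℝ) x :=
      (EuclideanSpace.proj i : E2 →L[ℝ] ℝ).hasFDerivAt
    have hj : HasFDerivAt (fun x : E2 => x j) (EuclideanSpace.proj j : E2 →L[ℝ] ℝ) x :=
      (EuclideanSpace.proj j : E2 →L[ℝ] ℝ).hasFDerivAt
    have := (((hi.mul hi).const_mul (1 / 2)).add ((hj.mul hj).const_mul (1 / 2))).add
      ((hi.mul hj).const_mul B)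
    refine hasFDerivAt_of_pointwise this (fun y => ?_) fun v => ?_
    · simp; ring
    · simp; ring
  have hd : ∀ x ∈ Qset, HasFDerivAt (fun x => u x - (x i ^ 2 / 2 + x j ^ 2 / 2 + B * (x i * x j)))
      (0 : E2 →L[ℝ] ℝ) x := by
    intro x hx
    refine hasFDerivAt_of_pointwise ((h.du x hx).sub (hquad x)) (fun _ => rfl) fun v => ?_
    simp [grad_apply' hij, hGi x hx, hGj x hx]
  obtain ⟨K, hK⟩ := isOpen_Q.exists_is_const_of_fderiv_eq_zero convex_Q.isPreconnected
    (fun x hx => (hd x hx).differentiableAt.differentiableWithinAt)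
    (fun x hx => (hd x hx).fderiv)
  have hcl : ∀ x ∈ closure Qset, u x - (x i ^ 2 / 2 + x j ^ 2 / 2 + B * (x i * x j)) = K := by
    have hc1 : ContinuousOn (fun x => u x - (x i ^ 2 / 2 + x j ^ 2 / 2 + B * (x i * x j)))
        (closure Qset) := h.cu.sub (by fun_prop)
    intro x hx
    have : (𝓝[Qset] x).NeBot := mem_closure_iff_nhdsWithin_neBot.1 hx
    have h1 := ((hc1 x hx).mono subset_closure).tendsto
    refine tendsto_nhds_unique h1 (tendsto_const_nhds.congr' ?_)
    filter_upwards [self_mem_nhdsWithin] with y hy using (hK y hy).symm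
  have hK0 : K = 0 := by
    have h0 : (0 : E2) ∈ closure Qset := mem_cQ.2 fun k => le_rfl
    have h1 := hcl 0 h0
    rw [h.bd 0 h0 0 rfl] at h1
    simpa using h1.symm
  have hform : ∀ x ∈ closure Qset, u x = x 0 ^ 2 / 2 + x 1 ^ 2 / 2 + B * (x 0 * x 1) := by
    intro x hx
    have h1 := hcl x hx
    rw [hK0] at h1
    fin_cases i <;> fin_cases j <;> simp at hij h1 ⊢ <;> linarith
  -- Differentiating the linear formulas for `G i` and `G j` gives unit pure second derivatives.
  have hii : ∀ {k l : Fin 2}, k ≠ l → (∀ x ∈ Qset, G k x = x k + B * x l) → H k k o = 1 := by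
    intro k l hkl hG
    have h1 : HasFDerivAt (fun x : E2 => x k + B * x l)
        ((EuclideanSpace.proj k : E2 →L[ℝ] ℝ) + B • (EuclideanSpace.proj l : E2 →L[ℝ] ℝ)) o :=
      (EuclideanSpace.proj k : E2 →L[ℝ] ℝ).hasFDerivAt.add
        ((EuclideanSpace.proj l : E2 →L[ℝ] ℝ).hasFDerivAt.const_mul B)
    have h2 := (h.dG k o hoQ).hasFDerivAt.unique (h1.congr_of_eventuallyEq
      (by filter_upwards [isOpen_Q.mem_nhds hoQ] with x hx using hG x hx))
    have h3 := congrArg (fun L : E2 →L[ℝ] ℝ => L (EuclideanSpace.single k 1)) h2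
    simpa [grad_apply' hkl, hkl.symm] using h3
  have hdet := h.det' hij hoQ
  rw [hii hij hGi, hii hij.symm hGj] at hdet
  have hB2 : 1 - c = B ^ 2 := by linarith
  rcases le_total 0 B with hB0 | hB0
  · left
    intro x hx
    rw [hform x hx, Pplus, hB2, Real.sqrt_sq hB0]
  · right
    intro x hx
    rw [hform x hx, Pminus, hB2, Real.sqrt_sq_eq_abs, abs_of_nonpos hB0]
    ring

end core

/-- If the continuous extension of u₁₂ to Q̄ \ {0} attains a local min or max there,
then u = P_c^+ or u = P_c^-. -/
theorem stmt5 (c : ℝ) (hc : c ∈ Set.Ioo (0:ℝ) 1) (u : E2 → ℝ) (hu : IsGlobalSolution c u)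
    (hext : ∃ g : E2 → ℝ, ContinuousOn g (closure Qset \ {0}) ∧
      (∀ x ∈ Qset, g x = pd2 0 1 u x) ∧
      ∃ x₀ ∈ closure Qset \ {0},
        IsLocalMinOn g (closure Qset \ {0}) x₀ ∨ IsLocalMaxOn g (closure Qset \ {0}) x₀) :
    (∀ x ∈ closure Qset, u x = Pplus c x) ∨ (∀ x ∈ closure Qset, u x = Pminus c x) := by
  obtain ⟨g, hgc, hg, x₀, hx₀, hext⟩ := hext
  obtain ⟨G, H, h, h01, h10⟩ := exists_PData hc.1 hu hgc hg
  obtain ⟨s, hs, hmax⟩ : ∃ s : ℝ, s ≠ 0 ∧ ∀ᶠ x in 𝓝[closure Qset \ {0}] x₀, s * g x ≤ s * g x₀ := by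
    rcases hext with hm | hm
    · refine ⟨-1, by norm_num, ?_⟩
      filter_upwards [hm] with x hx
      linarith
    · refine ⟨1, by norm_num, ?_⟩
      filter_upwards [hm] with x hx
      linarith
  have h0 := (mem_cQ.1 hx₀.1) 0
  have h1 := (mem_cQ.1 hx₀.1) 1
  have h01ne : (0 : Fin 2) ≠ 1 := by decide
  have hmax01 : ∀ᶠ x in 𝓝[closure Qset \ {0}] x₀, s * H 0 1 x ≤ s * H 0 1 x₀ := by rwa [h01]
  have hmax10 : ∀ᶠ x in 𝓝[closure Qset \ {0}] x₀, s * H 1 0 x ≤ s * H 1 0 x₀ := by rwa [h10]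
  -- The extremum lies on the first half-axis, on the second one, or in the open quadrant.
  rcases h1.eq_or_lt with h1 | h1
  · have h0 : 0 < x₀ 0 := by
      refine lt_of_le_of_ne h0 fun h0 => hx₀.2 ?_
      exact ext_ij h01ne h0.symm h1.symm
    obtain ⟨w, hw⟩ := h.const_of_boundary hc.1 h01ne h0 h1.symm hs hmax01
    exact h.conclusion hc.1 h01ne hw
  rcases h0.eq_or_lt with h0 | h0
  · obtain ⟨w, hw⟩ := h.const_of_boundary hc.1 h01ne.symm h1 h0.symm hs hmax10
    exact h.conclusion hc.1 h01ne.symm hw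
  · have hxQ : x₀ ∈ Qset := ⟨h0, h1⟩
    rw [nhdsWithin_eq_nhds.2 (mem_of_superset (isOpen_Q.mem_nhds hxQ) Q_sub)] at hmax01
    exact h.conclusion hc.1 h01ne (h.const_of_interior hc.1 h01ne hxQ hs hmax01)
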